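/- For every integer n ≥ 2, the opposite-boundary doubly-refined ASM generating function with bulk parameters related by y = x+1 satisfies: Zopp_n(x,x+1;z1,z2) = (x·z1·z2 + 1)·((x·z1+1)(x·z2+1))^{n−2}·(x+1)^{(n−2)(n−3)/2}, as an identity of polynomials in ℤ[x,z1,z2]. -/

import Mathlib

open Finset

/-- The `n × n` integer matrix encoded by `e`, with entries in `{-1, 0, 1}`. -/
def asmMat {n : ℕ} (e : Fin n → Fin n → Fin 3) : Fin n → Fin n → ℤ :=
  fun i j => (e i j : ℤ) - 1

/-- `A` is an alternating sign matrix: all entries lie in `{-1, 0, 1}`, every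
partial row sum and every partial column sum is `0` or `1` (equivalently, the
nonzero entries of each row and of each column alternate in sign), and every
complete row sum and column sum is `1`. -/
def IsASM {n : ℕ} (A : Fin n → Fin n → ℤ) : Prop :=
  (∀ i j, A i j = -1 ∨ A i j = 0 ∨ A i j = 1) ∧
  (∀ (i j : Fin n), (∑ j' ∈ univ.filter (fun j' : Fin n => j' ≤ j), A i j') = 0 ∨
    (∑ j' ∈ univ.filter (fun j' : Fin n => j' ≤ j), A i j') = 1) ∧
  (∀ (i j : Fin n), (∑ i' ∈ univ.filter (fun i' : Fin n => i' ≤ i), A i' j) = 0 ∨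
    (∑ i' ∈ univ.filter (fun i' : Fin n => i' ≤ i), A i' j) = 1) ∧
  (∀ i : Fin n, (∑ j, A i j) = 1) ∧
  (∀ j : Fin n, (∑ i, A i j) = 1)

/-- `ν(A)`, the number of generalized inversions of `A`. -/
def nuASM {n : ℕ} (A : Fin n → Fin n → ℤ) : ℕ :=
  (∑ i : Fin n, ∑ i' : Fin n, ∑ j : Fin n, ∑ j' : Fin n,
      if i < i' ∧ j' ≤ j then A i j * A i' j' else 0).toNat

/-- `μ(A)`, the number of entries of `A` equal to `-1`. -/
def muASM {n : ℕ} (A : Fin n → Fin n → ℤ) : ℕ :=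
  (univ.filter (fun p : Fin n × Fin n => A p.1 p.2 = -1)).card

/-- `ρT(A)`, the number of `0`'s to the left of the `1` in the top row of `A`. -/
def rhoT {n : ℕ} (A : Fin n → Fin n → ℤ) : ℕ :=
  (univ.filter (fun j : Fin n =>
    A ⟨0, j.pos⟩ j = 0 ∧ ∃ j' : Fin n, j < j' ∧ A ⟨0, j.pos⟩ j' = 1)).card

/-- `ρR(A)`, the number of `0`'s below the `1` in the right-most column of `A`. -/
def rhoR {n : ℕ} (A : Fin n → Fin n → ℤ) : ℕ :=
  (univ.filter (fun i : Fin n =>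
    A i ⟨n - 1, Nat.sub_lt i.pos Nat.one_pos⟩ = 0 ∧
      ∃ i' : Fin n, i' < i ∧ A i' ⟨n - 1, Nat.sub_lt i.pos Nat.one_pos⟩ = 1)).card

/-- `ρB(A)`, the number of `0`'s to the right of the `1` in the bottom row of `A`. -/
def rhoB {n : ℕ} (A : Fin n → Fin n → ℤ) : ℕ :=
  (univ.filter (fun j : Fin n =>
    A ⟨n - 1, Nat.sub_lt j.pos Nat.one_pos⟩ j = 0 ∧
      ∃ j' : Fin n, j' < j ∧ A ⟨n - 1, Nat.sub_lt j.pos Nat.one_pos⟩ j' = 1)).card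

/-- `ρL(A)`, the number of `0`'s above the `1` in the left-most column of `A`. -/
def rhoL {n : ℕ} (A : Fin n → Fin n → ℤ) : ℕ :=
  (univ.filter (fun i : Fin n =>
    A i ⟨0, i.pos⟩ = 0 ∧ ∃ i' : Fin n, i < i' ∧ A i' ⟨0, i.pos⟩ = 1)).card

open Classical in
/-- The quadruply-refined ASM generating function
`Zqua_n(x,y;z1,z2,z3,z4) = Σ_A x^{ν(A)} y^{μ(A)} z1^{ρT(A)} z2^{ρR(A)} z3^{ρB(A)} z4^{ρL(A)}`. -/
noncomputable def Zqua (n : ℕ) {R : Type*} [CommRing R] (x y z1 z2 z3 z4 : R) : R :=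
  ∑ e : Fin n → Fin n → Fin 3,
    if IsASM (asmMat e) then
      x ^ nuASM (asmMat e) * y ^ muASM (asmMat e) * z1 ^ rhoT (asmMat e) *
        z2 ^ rhoR (asmMat e) * z3 ^ rhoB (asmMat e) * z4 ^ rhoL (asmMat e)
    else 0

/-- Adjacent-boundary doubly-refined generating function `Zadj_n(x,y;z1,z2)`. -/
noncomputable def Zadj (n : ℕ) {R : Type*} [CommRing R] (x y z1 z2 : R) : R :=
  Zqua n x y z1 1 1 z2

/-- Alternative adjacent-boundary doubly-refined generating function `Zbaradj_n(x,y;z1,z2)`. -/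
noncomputable def Zbaradj (n : ℕ) {R : Type*} [CommRing R] (x y z1 z2 : R) : R :=
  Zqua n x y z1 z2 1 1

/-- Triply-refined generating function `Ztri_n(x,y;z1,z2,z3)`. -/
noncomputable def Ztri (n : ℕ) {R : Type*} [CommRing R] (x y z1 z2 z3 : R) : R :=
  Zqua n x y z1 1 z2 z3

/-- Opposite-boundary doubly-refined generating function `Zopp_n(x,y;z1,z2)`. -/
noncomputable def Zopp (n : ℕ) {R : Type*} [CommRing R] (x y z1 z2 : R) : R :=
  Zqua n x y z1 1 z2 1

/-- Singly-refined generating function `Z_n(x,y;z)`. -/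
noncomputable def Zsing (n : ℕ) {R : Type*} [CommRing R] (x y z : R) : R :=
  Zqua n x y z 1 1 1

/-- Unrefined generating function `Z_n(x,y)`.  Note `Zun 0 x y = 1`. -/
noncomputable def Zun (n : ℕ) {R : Type*} [CommRing R] (x y : R) : R :=
  Zqua n x y 1 1 1 1


/-- The integer row encoded by `e`. -/
def decodeRow {n : ℕ} (e : Fin n → Fin 3) : Fin n → ℤ := fun j => (e j : ℤ) - 1

/-- The multiplicity function of the values of `s`. -/
def indicatorRow {k n : ℕ} (s : Fin k → Fin n) : Fin n → ℤ :=
  fun j => ∑ i, if s i = j then 1 else 0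

/-- The row `r` may follow rows whose column sums are `c` in an alternating sign matrix. -/
def RowCompatible {n : ℕ} (c r : Fin n → ℤ) : Prop :=
  (∀ j, c j = 0 ∨ c j = 1) ∧
  (∀ j : Fin n, (∑ j' ∈ univ.filter (fun j' : Fin n => j' ≤ j), r j') = 0 ∨
    (∑ j' ∈ univ.filter (fun j' : Fin n => j' ≤ j), r j') = 1) ∧
  (∑ j, r j) = 1

open Classical in
/-- The weight of a row `r` placed below rows whose column sums are `c`. -/
noncomputable def rowWeight {R : Type*} [CommRing R] {n : ℕ} (x z : R) (c r : Fin n → ℤ) : R :=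
  if RowCompatible c r then
    x ^ (∑ j, c j * ∑ j' ∈ univ.filter (fun j' : Fin n => j' ≤ j), r j').toNat *
      (x + 1) ^ (univ.filter (fun j : Fin n => r j = -1)).card *
      z ^ (∑ j : Fin n, (j : ℤ) * r j).toNat
  else 0

/-- The weighted sum over all stacks of `k` rows with column sums `c`. -/
noncomputable def stackSum {R : Type*} [CommRing R] {k n : ℕ} (x : R) (X : Fin k → R)
    (c : Fin n → ℤ) : R :=
  ∑ e : Fin k → Fin n → Fin 3,
    if (∑ i, decodeRow (e i)) = c then
      ∏ i, rowWeight x (X i) (∑ i' ∈ univ.filter (fun i' : Fin k => i' < i), decodeRow (e i'))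
        (decodeRow (e i))
    else 0

/-- The product of `F (X i) (X j)` over the pairs `i < j`. -/
def pairProd {R : Type*} [CommRing R] {k : ℕ} (F : R → R → R) (X : Fin k → R) : R :=
  ∏ i, ∏ j, if i < j then F (X i) (X j) else 1

section

variable {R : Type*} [CommRing R]

lemma pairProd_castSucc {k : ℕ} (F : R → R → R) (X : Fin (k + 1) → R) :
    pairProd F X = pairProd F (fun i : Fin k => X i.castSucc) *
      ∏ i : Fin k, F (X i.castSucc) (X (Fin.last k)) := by
  unfold pairProd
  rw [Fin.prod_univ_castSucc]
  simp [Fin.prod_univ_castSucc, Fin.castSucc_lt_last, prod_mul_distrib,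
    fun i : Fin k => (Fin.castSucc_lt_last i).not_gt]

lemma pairProd_succ {k : ℕ} (F : R → R → R) (X : Fin (k + 1) → R) :
    pairProd F X = (∏ i : Fin k, F (X 0) (X i.succ)) *
      pairProd F (fun i : Fin k => X i.succ) := by
  unfold pairProd
  rw [Fin.prod_univ_succ]
  simp [Fin.prod_univ_succ]

lemma pairProd_const {k : ℕ} (F : R → R → R) (a : R) :
    pairProd F (fun _ : Fin k => a) = F a a ^ (k * (k - 1) / 2) := by
  rw [← Finset.sum_range_id]
  induction k with
  | zero => simp [pairProd]
  | succ k ih => rw [pairProd_castSucc, ih, Finset.sum_range_succ, pow_add]; simp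

lemma pairProd_eq_Ioi {k : ℕ} (F : R → R → R) (X : Fin k → R) :
    pairProd F X = ∏ i, ∏ j ∈ Ioi i, F (X i) (X j) := by
  unfold pairProd
  refine prod_congr rfl fun i _ => ?_
  rw [← prod_filter]
  exact prod_congr (by ext; simp) fun _ _ => rfl

lemma stackSum_zero {n : ℕ} (x : R) (X : Fin 0 → R) (c : Fin n → ℤ) :
    stackSum x X c = if 0 = c then 1 else 0 := by
  simp [stackSum]

lemma stackSum_succ {k n : ℕ} (x : R) (X : Fin (k + 1) → R) (c : Fin n → ℤ) :
    stackSum x X c = ∑ r : Fin n → Fin 3,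
      rowWeight x (X (Fin.last k)) (c - decodeRow r) (decodeRow r) *
        stackSum x (fun i : Fin k => X i.castSucc) (c - decodeRow r) := by
  unfold stackSum
  rw [← (Fin.snocEquiv (fun _ : Fin (k + 1) => Fin n → Fin 3)).sum_comp, Fintype.sum_prod_type]
  refine sum_congr rfl fun r _ => ?_
  rw [mul_sum]
  refine sum_congr rfl fun e _ => ?_
  have h1 : univ.filter (fun i' : Fin (k + 1) => i' < Fin.last k) =
      univ.map Fin.castSuccEmb := by
    ext i
    refine Fin.lastCases ?_ (fun i => ?_) i <;> simp [Fin.castSucc_lt_last]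
  have h2 (i : Fin k) : univ.filter (fun i' : Fin (k + 1) => i' < i.castSucc) =
      (univ.filter (fun i' : Fin k => i' < i)).map Fin.castSuccEmb := by
    ext j
    refine Fin.lastCases ?_ (fun j => ?_) j
    · simp [not_lt.2 (Fin.le_last _)]
    · simp
  simp only [Fin.snocEquiv, Equiv.coe_fn_mk, Fin.sum_univ_castSucc, Fin.prod_univ_castSucc,
    Fin.snoc_castSucc, Fin.snoc_last, h1, h2, sum_map, Fin.coe_castSuccEmb,
    eq_sub_iff_add_eq, mul_ite, mul_zero]
  split_ifs with h
  · rw [← h, add_sub_cancel_right, mul_comm]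
  · rfl

lemma sum_prod_mul_det {k : ℕ} {ι S : Type*} [CommRing S] (I : Fin k → Finset ι)
    (c : Fin k → ι → S) (M : Fin k → ι → S) :
    ∑ t ∈ Fintype.piFinset I, (∏ b, c b (t b)) * (Matrix.of fun a b => M a (t b)).det =
      (Matrix.of fun a b => ∑ t ∈ I b, c b t * M a t).det := by
  classical
  simp only [Matrix.det_apply', Matrix.of_apply, mul_sum, prod_univ_sum]
  rw [sum_comm]
  refine sum_congr rfl fun σ _ => sum_congr rfl fun t _ => ?_
  rw [prod_mul_distrib]
  ring

lemma sum_Icc_weight {S : Type*} [CommRing S] (x : S) (f : ℕ → S) {a b : ℕ} (h : a < b) :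
    ∑ t ∈ Icc a b, (if t = b then x else if t = a then 1 else x + 1) * f t =
      ∑ t ∈ Ico a b, (f t + x * f (t + 1)) := by
  rw [sum_add_distrib, ← mul_sum, Finset.sum_Ico_add' f a b 1,
    ← Finset.Ico_succ_right_eq_Icc]
  simp only [Order.succ_eq_add_one]
  rw [Finset.sum_Ico_succ_top h.le, Finset.sum_Ico_succ_top (by omega : a + 1 ≤ b),
    Finset.sum_eq_sum_Ico_succ_bot h, Finset.sum_eq_sum_Ico_succ_bot h]
  have : ∑ t ∈ Ico (a + 1) b, (if t = b then x else if t = a then 1 else x + 1) * f t =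
      (x + 1) * ∑ t ∈ Ico (a + 1) b, f t := by
    rw [mul_sum]
    refine sum_congr rfl fun t ht => ?_
    rw [mem_Ico] at ht
    rw [if_neg (by omega), if_neg (by omega)]
  rw [this, if_pos rfl, if_neg h.ne, if_pos rfl]
  ring

lemma sub_mul_sum_Icc_weight (x y z : R) {n : ℕ} {a b : Fin n} (h : a < b) :
    (z - y) * ∑ t ∈ Icc a b,
      ((if t = b then x else if t = a then 1 else x + 1) * z ^ ((b : ℕ) - t)) * y ^ (t : ℕ) =
      (z + x * y) * (z ^ ((b : ℕ) - a) * y ^ (a : ℕ) - y ^ (b : ℕ)) := by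
  have h1 : ∑ t ∈ Icc a b,
      ((if t = b then x else if t = a then 1 else x + 1) * z ^ ((b : ℕ) - t)) * y ^ (t : ℕ) =
      ∑ t ∈ Icc (a : ℕ) b, (if t = (b : ℕ) then x else if t = (a : ℕ) then 1 else x + 1) *
        (z ^ ((b : ℕ) - t) * y ^ t) := by
    rw [← Fin.map_valEmbedding_Icc, sum_map]
    simp [Fin.ext_iff, mul_assoc]
  have h2 : ∑ t ∈ Ico (a : ℕ) b, (z ^ ((b : ℕ) - t) * y ^ t +
      x * (z ^ ((b : ℕ) - (t + 1)) * y ^ (t + 1))) =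
      (z + x * y) * ∑ t ∈ Ico (a : ℕ) b, y ^ t * z ^ ((b : ℕ) - 1 - t) := by
    rw [mul_sum]
    refine sum_congr rfl fun t ht => ?_
    rw [mem_Ico] at ht
    obtain ⟨d, hd⟩ := Nat.exists_eq_add_of_lt ht.2
    rw [show (b : ℕ) - t = d + 1 by omega, show (b : ℕ) - (t + 1) = d by omega,
      show (b : ℕ) - 1 - t = d by omega]
    ring
  rw [h1, sum_Icc_weight x _ (Fin.lt_def.1 h), h2]
  have := mul_geom_sum₂_Ico y z (Fin.lt_def.1 h).le
  linear_combination (-(z + x * y)) * this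

lemma det_pow_succ {k n : ℕ} (X : Fin (k + 1) → R) (s : Fin (k + 1) → Fin n)
    (hs : StrictMono s) :
    (Matrix.of fun a b => X a ^ (s b : ℕ)).det =
      X (Fin.last k) ^ (s 0 : ℕ) *
      (Matrix.of fun a b : Fin k =>
        X (Fin.last k) ^ ((s b.succ : ℕ) - s b.castSucc) * X a.castSucc ^ (s b.castSucc : ℕ) -
          X a.castSucc ^ (s b.succ : ℕ)).det := by
  set z := X (Fin.last k) with hz
  have hlt (b : Fin k) : (s b.castSucc : ℕ) < s b.succ := hs Fin.castSucc_lt_succ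
  rw [Matrix.det_eq_of_forall_col_eq_smul_add_pred (B := Matrix.of fun a =>
      Fin.cons (X a ^ (s 0 : ℕ)) (fun b : Fin k =>
        X a ^ (s b.succ : ℕ) - z ^ ((s b.succ : ℕ) - s b.castSucc) * X a ^ (s b.castSucc : ℕ)))
    (fun b : Fin k => z ^ ((s b.succ : ℕ) - s b.castSucc)) (by simp) (by simp)]
  rw [Matrix.det_succ_row _ (Fin.last k), Fin.sum_univ_succ, sum_eq_zero]
  · simp only [Matrix.of_apply, Fin.cons_zero, add_zero, Fin.val_last, Fin.val_zero]
    rw [← hz, mul_comm _ (z ^ _), mul_assoc]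
    congr 1
    rw [show (Matrix.of fun a b : Fin k => z ^ ((s b.succ : ℕ) - s b.castSucc) *
        X a.castSucc ^ (s b.castSucc : ℕ) - X a.castSucc ^ (s b.succ : ℕ)) =
        -(Matrix.of fun a b : Fin k => X a.castSucc ^ (s b.succ : ℕ) -
          z ^ ((s b.succ : ℕ) - s b.castSucc) * X a.castSucc ^ (s b.castSucc : ℕ)) by
      ext; simp, Matrix.det_neg, Fintype.card_fin]
    congr 2
    ext a b
    simp [Fin.succAbove_last]
  · intro b _
    have : z ^ (s b.succ : ℕ) -
        z ^ ((s b.succ : ℕ) - s b.castSucc) * z ^ (s b.castSucc : ℕ) = 0 := by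
      rw [← pow_add, Nat.sub_add_cancel (hlt b).le, sub_self]
    simp [← hz, this]

lemma sum_indicatorRow_mul {k n : ℕ} (s : Fin k → Fin n) (f : Fin n → ℤ) :
    ∑ j, indicatorRow s j * f j = ∑ i, f (s i) := by
  simp only [indicatorRow, sum_mul]
  rw [sum_comm]
  simp

lemma sum_le_indicatorRow {k n : ℕ} (s : Fin k → Fin n) (j : Fin n) :
    ∑ j' ∈ univ.filter (fun j' : Fin n => j' ≤ j), indicatorRow s j' =
      (univ.filter (fun i => s i ≤ j)).card := by
  have := sum_indicatorRow_mul s (fun j' => if j' ≤ j then 1 else 0)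
  simpa [sum_filter, mul_ite] using this

lemma indicatorRow_of_injective {k n : ℕ} {s : Fin k → Fin n} (hs : Function.Injective s)
    (j : Fin n) [Decidable (∃ i, s i = j)] :
    indicatorRow s j = if ∃ i, s i = j then 1 else 0 := by
  unfold indicatorRow
  split_ifs with h
  · obtain ⟨i, rfl⟩ := h
    simp [hs.eq_iff]
  · push Not at h
    simp [h]

lemma indicatorRow_injOn {k n : ℕ} {s t : Fin k → Fin n} (hs : StrictMono s)
    (ht : StrictMono t) (h : indicatorRow s = indicatorRow t) : s = t := by
  classical
  rw [← hs.range_inj ht]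
  ext j
  have := congrFun h j
  rw [indicatorRow_of_injective hs.injective, indicatorRow_of_injective ht.injective] at this
  simp only [Set.mem_range]
  split_ifs at this <;> simp_all

lemma lt_card_filter_le_iff {k n : ℕ} {s : Fin k → Fin n} (hs : StrictMono s) (i : Fin k)
    (j : Fin n) : (i : ℕ) < (univ.filter (fun i => s i ≤ j)).card ↔ s i ≤ j := by
  constructor
  · intro h
    by_contra hij
    have : univ.filter (fun i => s i ≤ j) ⊆ Iio i := fun a ha => by
      simp only [mem_filter, mem_univ, true_and, mem_Iio] at ha ⊢
      exact hs.lt_iff_lt.1 (lt_of_le_of_lt ha (not_le.1 hij))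
    have := card_le_card this
    rw [Fin.card_Iio] at this
    omega
  · intro h
    have : Iic i ⊆ univ.filter (fun i => s i ≤ j) := fun a ha => by
      simp only [mem_filter, mem_univ, true_and, mem_Iic] at ha ⊢
      exact (hs.monotone ha).trans h
    have := card_le_card this
    rw [Fin.card_Iic] at this
    omega

lemma card_filter_le_apply {k n : ℕ} {s : Fin k → Fin n} (hs : StrictMono s) (i : Fin k) :
    (univ.filter (fun i' => s i' ≤ s i)).card = i + 1 := by
  rw [← Fin.card_Iic]
  congr 1
  ext
  simp [hs.le_iff_le]

lemma card_filter_fin_le {k : ℕ} (p : Fin k → Prop) [DecidablePred p] :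
    (univ.filter p).card ≤ k := by
  simpa using card_filter_le univ p

/-- The sequence `t` interlaces with `s`. -/
def Interlaces {k n : ℕ} (s : Fin (k + 1) → Fin n) (t : Fin k → Fin n) : Prop :=
  ∀ i, s i.castSucc ≤ t i ∧ t i ≤ s i.succ

lemma interlaces_iff {k n : ℕ} {s : Fin (k + 1) → Fin n} {t : Fin k → Fin n}
    (hs : StrictMono s) (ht : StrictMono t) :
    Interlaces s t ↔ ∀ j,
      (univ.filter (fun i => t i ≤ j)).card ≤ (univ.filter (fun i => s i ≤ j)).card ∧
      (univ.filter (fun i => s i ≤ j)).card ≤ (univ.filter (fun i => t i ≤ j)).card + 1 := by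
  constructor
  · intro h j
    have hk := card_filter_fin_le (fun i => t i ≤ j)
    have hk' := card_filter_fin_le (fun i => s i ≤ j)
    constructor
    · by_contra! hlt
      let i : Fin k := ⟨_, hlt.trans_le hk⟩
      have h1 := (lt_card_filter_le_iff ht i j).1 hlt
      exact lt_irrefl _ ((lt_card_filter_le_iff hs i.castSucc j).2 ((h i).1.trans h1))
    · by_contra! hlt
      let i : Fin k := ⟨(univ.filter (fun i => t i ≤ j)).card, by omega⟩
      have h1 := (lt_card_filter_le_iff hs i.succ j).1 hlt
      exact lt_irrefl _ ((lt_card_filter_le_iff ht i j).2 ((h i).2.trans h1))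
  · intro h i
    constructor
    · rw [← lt_card_filter_le_iff hs i.castSucc]
      exact ((lt_card_filter_le_iff ht i _).2 le_rfl).trans_le (h _).1
    · rw [← lt_card_filter_le_iff ht i]
      have := ((lt_card_filter_le_iff hs i.succ _).2 le_rfl).trans_le (h _).2
      simpa using this

lemma card_filter_le_sub {k n : ℕ} {s : Fin (k + 1) → Fin n} {t : Fin k → Fin n}
    (hs : StrictMono s) (ht : StrictMono t) (h : Interlaces s t) (i : Fin k) :
    ((univ.filter (fun i' => s i' ≤ t i)).card : ℤ) - (univ.filter (fun i' => t i' ≤ t i)).card =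
      if t i = s i.succ then 1 else 0 := by
  have h1 := (interlaces_iff hs ht).1 h (t i)
  rw [card_filter_le_apply ht i] at h1 ⊢
  have h2 := lt_card_filter_le_iff hs i.succ (t i)
  have h3 := (h i).2
  rw [Fin.val_succ] at h2
  split_ifs with h4
  · have := h2.2 h4.ge
    omega
  · have : ¬ (i : ℕ) + 1 < (univ.filter (fun i' => s i' ≤ t i)).card := by
      rw [h2, not_le]
      exact lt_of_le_of_ne h3 h4
    omega

lemma sum_le_indicatorRow_sub {k n : ℕ} (s : Fin (k + 1) → Fin n) (t : Fin k → Fin n)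
    (j : Fin n) : ∑ j' ∈ univ.filter (fun j' : Fin n => j' ≤ j),
      (indicatorRow s - indicatorRow t) j' =
      (univ.filter (fun i => s i ≤ j)).card - (univ.filter (fun i => t i ≤ j)).card := by
  simp [sum_sub_distrib, sum_le_indicatorRow]

lemma sum_indicatorRow {k n : ℕ} (s : Fin k → Fin n) : ∑ j, indicatorRow s j = k := by
  simpa using sum_indicatorRow_mul s (fun _ => 1)

lemma rowCompatible_indicatorRow {k n : ℕ} {s : Fin (k + 1) → Fin n} {t : Fin k → Fin n}
    (hs : StrictMono s) (ht : StrictMono t) :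
    RowCompatible (indicatorRow t) (indicatorRow s - indicatorRow t) ↔ Interlaces s t := by
  classical
  rw [interlaces_iff hs ht]
  unfold RowCompatible
  simp only [sum_le_indicatorRow_sub]
  constructor
  · rintro ⟨-, h, -⟩ j
    have := h j
    omega
  · intro h
    refine ⟨fun j => ?_, fun j => ?_, by simp [sum_sub_distrib, sum_indicatorRow]⟩
    · rw [indicatorRow_of_injective ht.injective]
      split_ifs <;> simp
    · have := h j
      omega

lemma exists_eq_indicatorRow {k n : ℕ} {c : Fin n → ℤ} (hc : ∀ j, c j = 0 ∨ c j = 1)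
    (hk : ∑ j, c j = k) : ∃ t : Fin k → Fin n, StrictMono t ∧ indicatorRow t = c := by
  classical
  have hcard : (univ.filter (fun j => c j = 1)).card = k := by
    rw [← Nat.cast_inj (R := ℤ), ← hk, card_filter]
    push_cast
    refine sum_congr rfl fun j _ => ?_
    rcases hc j with h | h <;> simp [h]
  refine ⟨_, (orderEmbOfFin _ hcard).strictMono, ?_⟩
  ext j
  rw [indicatorRow_of_injective (orderEmbOfFin _ hcard).injective]
  have : (∃ i, (univ.filter (fun j => c j = 1)).orderEmbOfFin hcard i = j) ↔ c j = 1 := by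
    rw [← Set.mem_range, range_orderEmbOfFin]
    simp
  simp only [this]
  rcases hc j with h | h <;> simp [h]

lemma rowWeight_indicatorRow {k n : ℕ} (x z : R) {s : Fin (k + 1) → Fin n}
    {t : Fin k → Fin n} (hs : StrictMono s) (ht : StrictMono t) (h : Interlaces s t) :
    rowWeight x z (indicatorRow t) (indicatorRow s - indicatorRow t) =
      z ^ (s 0 : ℕ) * ∏ i, ((if t i = s i.succ then x else if t i = s i.castSucc then 1
        else x + 1) * z ^ ((s i.succ : ℕ) - t i)) := by
  classical
  rw [rowWeight, if_pos ((rowCompatible_indicatorRow hs ht).2 h)]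
  have h1 : (∑ j, indicatorRow t j * ∑ j' ∈ univ.filter (fun j' : Fin n => j' ≤ j),
      (indicatorRow s - indicatorRow t) j').toNat = ∑ i, if t i = s i.succ then 1 else 0 := by
    rw [sum_indicatorRow_mul t]
    simp only [sum_le_indicatorRow_sub, card_filter_le_sub hs ht h]
    rw [← Int.toNat_natCast (∑ i, if t i = s i.succ then 1 else 0)]
    push_cast
    rfl
  have h2 : (univ.filter (fun j => (indicatorRow s - indicatorRow t) j = -1)).card =
      ∑ i, if t i = s i.succ then 0 else if t i = s i.castSucc then 0 else 1 := by
    have : univ.filter (fun j => (indicatorRow s - indicatorRow t) j = -1) =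
        (univ.filter (fun i => t i ≠ s i.succ ∧ t i ≠ s i.castSucc)).map
          ⟨t, ht.injective⟩ := by
      ext j
      simp only [mem_filter, mem_univ, true_and, mem_map, Function.Embedding.coeFn_mk,
        Pi.sub_apply, indicatorRow_of_injective hs.injective,
        indicatorRow_of_injective ht.injective]
      constructor
      · intro hj
        split_ifs at hj with h3 h4 h4 <;> simp at hj
        obtain ⟨i, rfl⟩ := h4
        exact ⟨i, ⟨fun h5 => h3 ⟨_, h5.symm⟩, fun h5 => h3 ⟨_, h5.symm⟩⟩, rfl⟩
      · rintro ⟨i, ⟨h3, h4⟩, rfl⟩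
        rw [if_pos (⟨i, rfl⟩ : ∃ i', t i' = t i), if_neg]
        · simp
        rintro ⟨a, ha⟩
        have h5 : i.castSucc < a := hs.lt_iff_lt.1 (by
          rw [ha]; exact lt_of_le_of_ne (h i).1 h4.symm)
        have h6 : a < i.succ := hs.lt_iff_lt.1 (by
          rw [ha]; exact lt_of_le_of_ne (h i).2 h3)
        rw [Fin.lt_def] at h5 h6
        simp at h5 h6
        omega
    rw [this, card_map, card_filter]
    refine sum_congr rfl fun i _ => ?_
    split_ifs <;> simp_all
  have h3 : (∑ j : Fin n, (j : ℤ) * (indicatorRow s - indicatorRow t) j).toNat =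
      (s 0 : ℕ) + ∑ i, ((s i.succ : ℕ) - t i) := by
    rw [← Int.toNat_natCast ((s 0 : ℕ) + ∑ i, ((s i.succ : ℕ) - t i))]
    congr 1
    have h4 := sum_indicatorRow_mul s (fun j => (j : ℤ))
    have h5 := sum_indicatorRow_mul t (fun j => (j : ℤ))
    simp only [Pi.sub_apply, mul_sub, sum_sub_distrib]
    simp only [mul_comm _ (indicatorRow _ _), h4, h5]
    rw [Fin.sum_univ_succ]
    push_cast
    rw [add_sub_assoc, ← sum_sub_distrib]
    congr 1
    refine sum_congr rfl fun i _ => ?_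
    rw [Nat.cast_sub (h i).2]
  rw [h1, h2, h3, pow_add, prod_mul_distrib, ← prod_pow_eq_pow_sum, ← prod_pow_eq_pow_sum,
    ← prod_pow_eq_pow_sum, ← prod_mul_distrib, mul_left_comm]
  congr 2
  refine prod_congr rfl fun i _ => ?_
  split_ifs <;> simp

lemma decodeRow_injective {n : ℕ} : Function.Injective (decodeRow (n := n)) := by
  intro e f h
  ext j
  have := congrFun h j
  simp only [decodeRow] at this
  omega

lemma exists_decodeRow_eq {n : ℕ} {r : Fin n → ℤ} (hr : ∀ j, -1 ≤ r j ∧ r j ≤ 1) :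
    ∃ e, decodeRow e = r := by
  refine ⟨fun j => ⟨(r j + 1).toNat, by have := hr j; omega⟩, ?_⟩
  ext j
  have := hr j
  simp only [decodeRow]
  omega

open Classical in
lemma stackSum_indicatorRow_succ {k n : ℕ} (x : R) (X : Fin (k + 1) → R)
    {s : Fin (k + 1) → Fin n} (hs : StrictMono s) :
    stackSum x X (indicatorRow s) =
      ∑ t ∈ univ.filter (fun t : Fin k → Fin n => StrictMono t ∧ Interlaces s t),
        rowWeight x (X (Fin.last k)) (indicatorRow t) (indicatorRow s - indicatorRow t) *
          stackSum x (fun i : Fin k => X i.castSucc) (indicatorRow t) := by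
  have hex (t : Fin k → Fin n) (ht : StrictMono t) :
      ∃ e, decodeRow e = indicatorRow s - indicatorRow t := by
    refine exists_decodeRow_eq fun j => ?_
    rw [Pi.sub_apply, indicatorRow_of_injective hs.injective,
      indicatorRow_of_injective ht.injective]
    split_ifs <;> simp
  have hex' (t : Fin k → Fin n) :
      ∃ e, StrictMono t → decodeRow e = indicatorRow s - indicatorRow t := by
    by_cases ht : StrictMono t
    · exact (hex t ht).imp fun _ h _ => h
    · exact ⟨0, fun h => absurd h ht⟩
  choose e he using hex'
  rw [stackSum_succ]
  symm
  refine sum_of_injOn e ?_ (fun _ _ => mem_coe.2 (mem_univ _)) ?_ ?_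
  · intro t ht t' ht' htt
    simp only [coe_filter, mem_univ, true_and, Set.mem_ofPred_eq] at ht ht'
    refine indicatorRow_injOn ht.1 ht'.1 (sub_right_injective (b := indicatorRow s) ?_)
    change indicatorRow s - indicatorRow t = indicatorRow s - indicatorRow t'
    rw [← he t ht.1, ← he t' ht'.1, htt]
  · intro r _ hr
    by_cases hc : RowCompatible (indicatorRow s - decodeRow r) (decodeRow r)
    · obtain ⟨t, ht, hst⟩ := exists_eq_indicatorRow (k := k) hc.1 (by
        simp only [Pi.sub_apply, sum_sub_distrib, sum_indicatorRow, hc.2.2]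
        push_cast
        ring)
      have hr' : decodeRow r = indicatorRow s - indicatorRow t := by
        rw [hst, sub_sub_cancel]
      refine absurd ⟨t, ?_, decodeRow_injective ((he t ht).trans hr'.symm)⟩ hr
      rw [← hst, hr', rowCompatible_indicatorRow hs ht] at hc
      simpa using ⟨ht, hc⟩
    · rw [rowWeight, if_neg hc, zero_mul]
  · intro t ht
    rw [mem_filter] at ht
    rw [he t ht.2.1, sub_sub_cancel]

open Classical in
lemma sum_interlaces_mul_det {k n : ℕ} (x : R) (X : Fin (k + 1) → R)
    {s : Fin (k + 1) → Fin n} (hs : StrictMono s) :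
    ∑ t ∈ univ.filter (fun t : Fin k → Fin n => StrictMono t ∧ Interlaces s t),
        rowWeight x (X (Fin.last k)) (indicatorRow t) (indicatorRow s - indicatorRow t) *
          (Matrix.of fun a b : Fin k => X a.castSucc ^ (t b : ℕ)).det =
      X (Fin.last k) ^ (s 0 : ℕ) * (Matrix.of fun a b : Fin k =>
        ∑ t ∈ Icc (s b.castSucc) (s b.succ), ((if t = s b.succ then x
          else if t = s b.castSucc then 1 else x + 1) *
          X (Fin.last k) ^ ((s b.succ : ℕ) - t)) * X a.castSucc ^ (t : ℕ)).det := by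
  rw [← sum_prod_mul_det (fun b : Fin k => Icc (s b.castSucc) (s b.succ)) _
    (fun a (t : Fin n) => X a.castSucc ^ (t : ℕ)), mul_sum]
  refine (sum_subset_zero_on_sdiff ?_ ?_ ?_)
  · intro t ht
    simp only [mem_filter, mem_univ, true_and] at ht
    exact Fintype.mem_piFinset.2 fun i => mem_Icc.2 (ht.2 i)
  · intro t ht
    simp only [mem_sdiff, Fintype.mem_piFinset, mem_Icc, mem_filter, mem_univ, true_and,
      not_and'] at ht
    have hmono : Monotone t := by
      cases k with
      | zero => exact fun a => a.elim0
      | succ k =>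
        refine Fin.monotone_iff_le_succ.2 fun i => (ht.1 _).2.trans ?_
        rw [Fin.succ_castSucc]
        exact (ht.1 i.succ).1
    have hinj : ¬ Function.Injective t := fun h => ht.2 ht.1 (hmono.strictMono_of_injective h)
    simp only [Function.Injective, not_forall] at hinj
    obtain ⟨a, b, hab, hne⟩ := hinj
    rw [Matrix.det_zero_of_column_eq hne (by simp [hab]), mul_zero, mul_zero]
  · intro t ht
    rw [mem_filter] at ht
    rw [rowWeight_indicatorRow x _ hs ht.2.1 ht.2.2, mul_assoc]

/-- Tokuyama's deformation of the Weyl character formula, in bialternant form. -/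
theorem stackSum_mul_pairProd {k n : ℕ} (x : R) (X : Fin k → R) {s : Fin k → Fin n}
    (hs : StrictMono s) :
    stackSum x X (indicatorRow s) * pairProd (fun a b => b - a) X =
      (Matrix.of fun a b => X a ^ (s b : ℕ)).det * pairProd (fun a b => b + x * a) X := by
  classical
  induction k with
  | zero =>
    rw [stackSum_zero, if_pos]
    · simp [pairProd]
    · ext; simp [indicatorRow]
  | succ k ih =>
    set z := X (Fin.last k) with hz
    have h1 : ((∏ i : Fin k, (z - X i.castSucc)) * (Matrix.of fun a b : Fin k =>
        ∑ t ∈ Icc (s b.castSucc) (s b.succ), ((if t = s b.succ then x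
          else if t = s b.castSucc then 1 else x + 1) *
          z ^ ((s b.succ : ℕ) - t)) * X a.castSucc ^ (t : ℕ)).det) =
        (∏ i : Fin k, (z + x * X i.castSucc)) * (Matrix.of fun a b : Fin k =>
          z ^ ((s b.succ : ℕ) - s b.castSucc) * X a.castSucc ^ (s b.castSucc : ℕ) -
          X a.castSucc ^ (s b.succ : ℕ)).det := by
      rw [← Matrix.det_mul_column, ← Matrix.det_mul_column]
      congr 1
      ext a b
      simp only [Matrix.of_apply]
      exact sub_mul_sum_Icc_weight x _ z (hs Fin.castSucc_lt_succ)
    have h2 := sum_interlaces_mul_det x X hs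
    rw [← hz] at h2
    have h3 : stackSum x X (indicatorRow s) *
        pairProd (fun a b => b - a) (fun i : Fin k => X i.castSucc) =
        (∑ t ∈ univ.filter (fun t : Fin k → Fin n => StrictMono t ∧ Interlaces s t),
          rowWeight x z (indicatorRow t) (indicatorRow s - indicatorRow t) *
          (Matrix.of fun a b : Fin k => X a.castSucc ^ (t b : ℕ)).det) *
          pairProd (fun a b => b + x * a) (fun i : Fin k => X i.castSucc) := by
      rw [stackSum_indicatorRow_succ x X hs, sum_mul, sum_mul]
      refine sum_congr rfl fun t ht => ?_
      rw [mem_filter] at ht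
      rw [mul_assoc, ih _ ht.2.1, mul_assoc]
    rw [pairProd_castSucc, pairProd_castSucc, det_pow_succ X s hs, ← hz]
    linear_combination (∏ i : Fin k, (z - X i.castSucc)) * h3 +
      pairProd (fun a b => b + x * a) (fun i : Fin k => X i.castSucc) *
        (∏ i : Fin k, (z - X i.castSucc)) * h2 +
      z ^ (s 0 : ℕ) * pairProd (fun a b => b + x * a) (fun i : Fin k => X i.castSucc) * h1

lemma stackSum_one_of_injective [IsDomain R] {n : ℕ} (x : R) {X : Fin n → R}
    (hX : Function.Injective X) :
    stackSum x X (1 : Fin n → ℤ) = pairProd (fun a b => b + x * a) X := by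
  have h := stackSum_mul_pairProd x X (s := id) strictMono_id
  have h1 : indicatorRow (id : Fin n → Fin n) = 1 := by
    ext; simp [indicatorRow]
  have h2 : (Matrix.of fun a b : Fin n => X a ^ ((id b : Fin n) : ℕ)).det =
      pairProd (fun a b => b - a) X := by
    rw [pairProd_eq_Ioi]
    exact Matrix.det_vandermonde X
  rw [h1, h2, mul_comm] at h
  refine mul_left_cancel₀ ?_ h
  rw [← h2]
  exact Matrix.det_vandermonde_ne_zero_iff.2 hX

lemma map_stackSum {S : Type*} [CommRing S] (f : R →+* S) {k n : ℕ} (x : R) (X : Fin k → R)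
    (c : Fin n → ℤ) : f (stackSum x X c) = stackSum (f x) (fun i => f (X i)) c := by
  simp [stackSum, rowWeight, map_sum, apply_ite f, map_prod]

lemma map_pairProd {S : Type*} [CommRing S] (f : R →+* S) {k : ℕ} (x : R) (X : Fin k → R) :
    f (pairProd (fun a b => b + x * a) X) =
      pairProd (fun a b => b + f x * a) (fun i => f (X i)) := by
  simp [pairProd, apply_ite f, map_prod]

/-- The `λ`-determinant of the Vandermonde matrix as a sum over alternating sign matrices. -/
theorem stackSum_one {n : ℕ} (x : R) (X : Fin n → R) :
    stackSum x X (1 : Fin n → ℤ) = pairProd (fun a b => b + x * a) X := by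
  have h := stackSum_one_of_injective (R := MvPolynomial (Option (Fin n)) ℤ)
    (MvPolynomial.X none) (X := fun i => MvPolynomial.X (some i))
    ((MvPolynomial.X_injective).comp (Option.some_injective _))
  have h' := congrArg (MvPolynomial.eval₂Hom (Int.castRingHom R)
    (fun o : Option (Fin n) => o.elim x X)) h
  rw [map_stackSum, map_pairProd] at h'
  simpa using h'

lemma isASM_iff {n : ℕ} {A : Fin n → Fin n → ℤ} (hA : ∀ i j, A i j = -1 ∨ A i j = 0 ∨ A i j = 1) :
    IsASM A ↔ (∑ i, A i) = 1 ∧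
      ∀ i, RowCompatible (∑ i' ∈ univ.filter (fun i' : Fin n => i' < i), A i') (A i) := by
  have hle (i : Fin n) : univ.filter (fun i' : Fin n => i' ≤ i) =
      insert i (univ.filter (fun i' : Fin n => i' < i)) := by
    ext
    simp [le_iff_eq_or_lt]
  constructor
  · rintro ⟨-, hrow, hcol, hrow', hcol'⟩
    refine ⟨by ext j; simpa using hcol' j, fun i => ⟨fun j => ?_, hrow i, hrow' i⟩⟩
    rw [Finset.sum_apply]
    rcases Nat.eq_zero_or_pos (i : ℕ) with h0 | h0
    · left
      refine sum_eq_zero fun i' hi' => ?_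
      simp [Fin.lt_def, h0] at hi'
    · have := hcol ⟨i - 1, by omega⟩ j
      convert this using 3 <;>
      · ext i'
        simp only [mem_filter, mem_univ, true_and, Fin.lt_def, Fin.le_def]
        omega
  · rintro ⟨hsum, h⟩
    have hcol (j : Fin n) : ∑ i, A i j = 1 := by simpa using congrFun hsum j
    refine ⟨hA, fun i => (h i).2.1, fun i j => ?_, fun i => (h i).2.2, hcol⟩
    by_cases hi : (i : ℕ) + 1 < n
    · have := (h ⟨i + 1, hi⟩).1 j
      rw [Finset.sum_apply] at this
      convert this using 3 <;>
      · ext i'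
        simp only [mem_filter, mem_univ, true_and, Fin.lt_def, Fin.le_def]
        omega
    · right
      rw [← hcol j]
      refine sum_congr (filter_true_of_mem fun i' _ => ?_) fun _ _ => rfl
      rw [Fin.le_def]
      omega

lemma row_eq_single {n : ℕ} {f : Fin n → ℤ} (hf : ∀ j, f j = 0 ∨ f j = 1) (hs : ∑ j, f j = 1) :
    ∃ j, f = Pi.single j 1 := by
  obtain ⟨t, -, ht⟩ := exists_eq_indicatorRow (k := 1) hf (by simpa using hs)
  refine ⟨t 0, ?_⟩
  rw [← ht]
  ext j
  rw [indicatorRow, Fin.sum_univ_one, Pi.single_apply]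
  simp only [eq_comm]

lemma nuASM_eq {n : ℕ} {A : Fin n → Fin n → ℤ}
    (h : ∀ i, RowCompatible (∑ i' ∈ univ.filter (fun i' : Fin n => i' < i), A i') (A i)) :
    nuASM A = ∑ i, (∑ j, (∑ i' ∈ univ.filter (fun i' : Fin n => i' < i), A i') j *
      ∑ j' ∈ univ.filter (fun j' : Fin n => j' ≤ j), A i j').toNat := by
  rw [nuASM, ← Int.toNat_natCast (∑ i, Int.toNat _)]
  congr 1
  push_cast
  rw [sum_comm]
  refine sum_congr rfl fun i _ => ?_
  rw [Int.toNat_of_nonneg]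
  · rw [sum_comm]
    refine sum_congr rfl fun j _ => ?_
    rw [Finset.sum_apply, sum_mul_sum, sum_filter]
    refine sum_congr rfl fun i' _ => ?_
    split_ifs with hi <;> simp [hi, sum_filter]
  · refine sum_nonneg fun j _ => ?_
    have h1 := (h i).1 j
    have h2 := (h i).2.1 j
    exact mul_nonneg (by omega) (by omega)

lemma muASM_eq {n : ℕ} (A : Fin n → Fin n → ℤ) :
    muASM A = ∑ i, (univ.filter (fun j => A i j = -1)).card := by
  simp only [muASM, card_filter, Fintype.sum_prod_type]

lemma rhoT_eq {m : ℕ} {A : Fin (m + 2) → Fin (m + 2) → ℤ} (hA : IsASM A) :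
    rhoT A = (∑ j : Fin (m + 2), (j : ℤ) * A 0 j).toNat := by
  obtain ⟨j₀, hj₀⟩ := row_eq_single (f := A 0) (fun j => by
    have := hA.2.2.1 0 j
    simpa [Fin.le_zero_iff, filter_eq'] using this) (hA.2.2.2.1 0)
  have h : univ.filter (fun j : Fin (m + 2) =>
      A ⟨0, j.pos⟩ j = 0 ∧ ∃ j' : Fin (m + 2), j < j' ∧ A ⟨0, j.pos⟩ j' = 1) = Iio j₀ := by
    ext j
    have : (⟨0, j.pos⟩ : Fin (m + 2)) = 0 := rfl
    simp only [this, hj₀, mem_filter, mem_univ, true_and, mem_Iio, Pi.single_apply]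
    constructor
    · rintro ⟨-, j', hj, h⟩
      split_ifs at h with h'
      · exact h' ▸ hj
      · simp at h
    · exact fun hj => ⟨by simp [hj.ne], j₀, hj, by simp⟩
  rw [rhoT, h, hj₀]
  simp [Pi.single_apply]

lemma rhoB_eq {m : ℕ} {A : Fin (m + 2) → Fin (m + 2) → ℤ} (hA : IsASM A) :
    rhoB A + (∑ j : Fin (m + 2), (j : ℤ) * A (Fin.last _) j).toNat = m + 1 := by
  obtain ⟨j₀, hj₀⟩ := row_eq_single (f := A (Fin.last _)) (fun j => by
    have h := hA.2.2.1 (Fin.castSucc (Fin.last m)) j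
    have h1 := hA.2.2.2.2 j
    have h2 : univ.filter (fun i' : Fin (m + 2) => i' ≤ Fin.castSucc (Fin.last m)) =
        univ.map Fin.castSuccEmb := by
      ext i
      refine Fin.lastCases ?_ (fun i => ?_) i
      · simp [Fin.le_def]
      · simp [Fin.le_last]
    rw [h2, sum_map] at h
    rw [Fin.sum_univ_castSucc] at h1
    simp only [Fin.coe_castSuccEmb] at h
    omega) (hA.2.2.2.1 _)
  have h : univ.filter (fun j : Fin (m + 2) =>
      A ⟨m + 2 - 1, Nat.sub_lt j.pos Nat.one_pos⟩ j = 0 ∧ ∃ j' : Fin (m + 2), j' < j ∧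
        A ⟨m + 2 - 1, Nat.sub_lt j.pos Nat.one_pos⟩ j' = 1) = Ioi j₀ := by
    ext j
    have : (⟨m + 2 - 1, Nat.sub_lt j.pos Nat.one_pos⟩ : Fin (m + 2)) = Fin.last _ := rfl
    simp only [this, hj₀, mem_filter, mem_univ, true_and, mem_Ioi, Pi.single_apply]
    constructor
    · rintro ⟨-, j', hj, h⟩
      split_ifs at h with h'
      · exact h' ▸ hj
      · simp at h
    · exact fun hj => ⟨by simp [hj.ne'], j₀, hj, by simp⟩
  rw [rhoB, h, hj₀]
  simp [Pi.single_apply]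
  omega

/-- The row parameters that refine by the first and the last row only. -/
def boundaryParams {m : ℕ} (a b : R) : Fin (m + 2) → R :=
  Fin.snoc (α := fun _ => R) (Fin.cons (α := fun _ => R) a fun _ : Fin m => 1) b

lemma prod_boundaryParams_pow {m : ℕ} (a b : R) (p : Fin (m + 2) → ℕ) :
    ∏ i, boundaryParams a b i ^ p i = a ^ p 0 * b ^ p (Fin.last _) := by
  rw [Fin.prod_univ_castSucc]
  simp only [boundaryParams, Fin.snoc_castSucc, Fin.snoc_last]
  rw [Fin.prod_univ_succ]
  simp

lemma pairProd_boundaryParams {m : ℕ} (x a b : R) :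
    pairProd (fun a b => b + x * a) (boundaryParams (m := m) a b) =
      (b + x * a) * ((1 + x * a) * (b + x)) ^ m * (1 + x) ^ (m * (m - 1) / 2) := by
  rw [pairProd_castSucc]
  simp only [boundaryParams, Fin.snoc_castSucc, Fin.snoc_last]
  rw [pairProd_succ, Fin.prod_univ_succ]
  simp only [Fin.cons_zero, Fin.cons_succ, pairProd_const, prod_const, card_univ,
    Fintype.card_fin, mul_one]
  rw [mul_pow]
  ring

lemma map_Zopp {S : Type*} [CommRing S] (f : R →+* S) (n : ℕ) (x y z1 z2 : R) :
    f (Zopp n x y z1 z2) = Zopp n (f x) (f y) (f z1) (f z2) := by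
  simp [Zopp, Zqua, map_sum, apply_ite f]

lemma Zopp_field {K : Type*} [Field K] (m : ℕ) (x z1 z2 : K) (h2 : z2 ≠ 0) :
    Zopp (m + 2) x (x + 1) z1 z2 =
      z2 ^ (m + 1) * stackSum x (boundaryParams (m := m) z1 z2⁻¹) (1 : Fin (m + 2) → ℤ) := by
  classical
  unfold Zopp Zqua stackSum
  rw [mul_sum]
  refine sum_congr rfl fun e _ => ?_
  have hiff := isASM_iff (A := asmMat e) (fun i j => by
    simp only [asmMat]
    omega)
  change (_ ↔ (∑ i, decodeRow (e i)) = 1 ∧ ∀ i, RowCompatible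
    (∑ i' ∈ univ.filter (fun i' : Fin (m + 2) => i' < i), decodeRow (e i'))
      (decodeRow (e i))) at hiff
  unfold rowWeight
  rw [prod_ite_zero, mul_ite, mul_zero]
  by_cases hA : IsASM (asmMat e)
  · obtain ⟨h3, h4⟩ := hiff.1 hA
    have h5 : z2 ^ (m + 1) = z2 ^ rhoB (asmMat e) *
        z2 ^ (∑ j : Fin (m + 2), (j : ℤ) * decodeRow (e (Fin.last _)) j).toNat := by
      rw [← pow_add]
      exact congrArg _ (rhoB_eq hA).symm
    rw [if_pos hA, if_pos h3, if_pos (fun i _ => h4 i), prod_mul_distrib, prod_mul_distrib,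
      prod_pow_eq_pow_sum, prod_pow_eq_pow_sum, prod_boundaryParams_pow,
      nuASM_eq (A := asmMat e) h4, muASM_eq, rhoT_eq hA, h5, inv_pow]
    simp only [one_pow, mul_one]
    have := pow_ne_zero
      (∑ j : Fin (m + 2), (j : ℤ) * decodeRow (e (Fin.last _)) j).toNat h2
    field_simp
    rfl
  · rw [if_neg hA]
    split_ifs with h3 h4
    · exact absurd (hiff.2 ⟨h3, fun i => h4 i (mem_univ i)⟩) hA
    · simp
    · rfl

lemma Zopp_eq_of_field {K : Type*} [Field K] (m : ℕ) (x z1 z2 : K) (h2 : z2 ≠ 0) :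
    Zopp (m + 2) x (x + 1) z1 z2 =
      (x * z1 * z2 + 1) * ((x * z1 + 1) * (x * z2 + 1)) ^ m *
        (x + 1) ^ (m * (m - 1) / 2) := by
  rw [Zopp_field m x z1 z2 h2, stackSum_one, pairProd_boundaryParams]
  have h3 : z2⁻¹ + x * z1 = (x * z1 * z2 + 1) * z2⁻¹ := by field_simp; ring
  have h4 : (1 + x * z1) * (z2⁻¹ + x) = (x * z1 + 1) * (x * z2 + 1) * z2⁻¹ := by
    field_simp
    ring
  rw [h3, h4, mul_pow _ z2⁻¹, inv_pow, add_comm 1 x, pow_succ]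
  field_simp

end

/-- The opposite-boundary doubly-refined ASM generating function at `y = x + 1`,
stated for all values of the variables in any commutative ring, equivalently
as an identity of polynomials in `ℤ[x,z1,z2]`. -/
theorem stmt16 {R : Type*} [CommRing R] (x z1 z2 : R) (n : ℕ) (hn : 2 ≤ n) :
    Zopp n x (x + 1) z1 z2 =
      (x * z1 * z2 + 1) * ((x * z1 + 1) * (x * z2 + 1)) ^ (n - 2) *
        (x + 1) ^ ((n - 2) * (n - 3) / 2) := by
  obtain ⟨m, rfl⟩ := Nat.exists_eq_add_of_le' hn
  rw [show m + 2 - 2 = m by omega, show m + 2 - 3 = m - 1 by omega]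
  let P := MvPolynomial (Fin 3) ℤ
  let ι : P →+* FractionRing P := algebraMap P (FractionRing P)
  have hι : Function.Injective ι := IsFractionRing.injective P (FractionRing P)
  have h := Zopp_eq_of_field m (ι (MvPolynomial.X 0)) (ι (MvPolynomial.X 1))
    (ι (MvPolynomial.X 2)) ((map_ne_zero_iff ι hι).2 (MvPolynomial.X_ne_zero 2))
  rw [← map_one ι, ← map_add, ← map_Zopp] at h
  simp only [← map_mul, ← map_add, ← map_pow] at h
  have h' := congrArg (MvPolynomial.eval₂Hom (Int.castRingHom R) ![x, z1, z2]) (hι h)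
  simp only [map_Zopp, map_mul, map_add, map_pow, map_one, MvPolynomial.eval₂Hom_X'] at h'
  simpa using h'
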